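/- Let α = (λ/Λ)(Q−1)+1 with Q = 2n+2 and 0 < λ ≤ Λ. Then the radial functions Φ₁(ξ) = φ₁(ρ(ξ)), where φ₁(r) = C₁r^{2−α}+C₂ if α < 2, φ₁(r) = C₁log r + C₂ if α = 2, and φ₁(r) = −C₁r^{2−α}+C₂ if α > 2 (C₁ ≥ 0, C₂ ∈ ℝ), satisfy 𝓜⁺_{λ,Λ}(D²Φ₁) = 0 classically in ℝ^{2n+1}∖{0}, and φ₁ is concave and increasing on (0,∞). -/

import Mathlib

open scoped BigOperators

noncomputable section

/-- Direction vector of the Heisenberg vector field `X_i` at the point `ξ ∈ ℝ^{2n+1}`: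
for `i < n`, `X_i = ∂_i + 2 ξ_{i+n} ∂_{2n}`; for `n ≤ i < 2n`, `X_i = ∂_i - 2 ξ_{i-n} ∂_{2n}`
(indices `0,…,2n`, the last coordinate being index `2n`). -/
def Xvec (n : ℕ) (ξ : Fin (2*n+1) → ℝ) (i : Fin (2*n)) : Fin (2*n+1) → ℝ :=
  fun j =>
    (if (j : ℕ) = (i : ℕ) then 1 else 0) +
    (if (j : ℕ) = 2*n then
        (if h : (i : ℕ) < n then 2 * ξ ⟨(i : ℕ) + n, by omega⟩
         else -2 * ξ ⟨(i : ℕ) - n, by have := i.isLt; omega⟩)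
      else 0)

/-- The Heisenberg vector field `X_i` acting on a function. -/
def X (n : ℕ) (i : Fin (2*n)) (f : (Fin (2*n+1) → ℝ) → ℝ)
    (ξ : Fin (2*n+1) → ℝ) : ℝ :=
  fderiv ℝ f ξ (Xvec n ξ i)

/-- `∑_{i=1}^{2n} ξ_i²`, the squared euclidean norm of the horizontal coordinates. -/
def hsq (n : ℕ) (ξ : Fin (2*n+1) → ℝ) : ℝ :=
  ∑ i : Fin (2*n), (ξ ⟨(i : ℕ), by have := i.isLt; omega⟩)^2

/-- The homogeneous norm `ρ(ξ) = ((∑ ξ_i²)² + ξ_{2n+1}²)^{1/4}`. -/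
def rho (n : ℕ) (ξ : Fin (2*n+1) → ℝ) : ℝ :=
  ((hsq n ξ)^2 + (ξ ⟨2*n, by omega⟩)^2) ^ (1/4 : ℝ)

/-- `|∇_{H^n}ρ(ξ)|²`. -/
def gradSq (n : ℕ) (ξ : Fin (2*n+1) → ℝ) : ℝ :=
  ∑ i : Fin (2*n), (X n i (rho n) ξ)^2

/-- The symmetrized Heisenberg Hessian `D²_{H^n} f = (X_i X_j f)_{sym}`. -/
def HessH (n : ℕ) (f : (Fin (2*n+1) → ℝ) → ℝ) (ξ : Fin (2*n+1) → ℝ) :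
    Matrix (Fin (2*n)) (Fin (2*n)) ℝ :=
  Matrix.of fun i j =>
    (X n i (fun η => X n j f η) ξ + X n j (fun η => X n i f η) ξ) / 2

/-- The Pucci maximal operator `𝓟⁺_{λ,Λ}(M) = -Λ ∑_{e_i<0} e_i - λ ∑_{e_i>0} e_i`. -/
def pucciPlus (la La : ℝ) {k : ℕ} {M : Matrix (Fin k) (Fin k) ℝ}
    (hM : M.IsHermitian) : ℝ :=
  ∑ i, (-La * min (hM.eigenvalues i) 0 - la * max (hM.eigenvalues i) 0)

/-- The Pucci minimal operator `𝓟⁻_{λ,Λ}(M) = -Λ ∑_{e_i>0} e_i - λ ∑_{e_i<0} e_i`. -/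
def pucciMinus (la La : ℝ) {k : ℕ} {M : Matrix (Fin k) (Fin k) ℝ}
    (hM : M.IsHermitian) : ℝ :=
  ∑ i, (-La * max (hM.eigenvalues i) 0 - la * min (hM.eigenvalues i) 0)

/-! The polynomial identity `ρ⁴ = |x|⁴ + t²` and the chain rule give
`ρ D²ρ = |∇ρ|² I - ∇ρ ⊗ ∇ρ + 2 J∇ρ ⊗ J∇ρ`, where `J` is the symplectic matrix: the mixed terms
disappear because `X_i X_j t` is antisymmetric, and `∇ρ`, `J∇ρ` span the same plane as `x`, `Jx`.
Hence `D²(φ ∘ ρ)` has the eigenvalue `|∇ρ|² φ''` along `∇ρ`, `3 |∇ρ|² φ' / ρ` along `J∇ρ`, and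
`|∇ρ|² φ' / ρ` on the orthogonal complement of both. If `φ` is concave and increasing, only the
first of them can be negative, so `𝓜⁺` equals `|∇ρ|² (-λ (2n+1) φ' / ρ - Λ φ'')`. This vanishes for
`φ' = c r^{1-α}`, since `Λ (α - 1) = λ (2n+1)`. -/

open scoped Matrix Topology

section Spectral

variable {ι : Type*} [Fintype ι]

theorem eq_and_sq_dotProduct_eq_of_mulVec_eq_smul_neg {M : Matrix ι ι ℝ} (hM : M.IsSymm)
    {w v : ι → ℝ} {μ e : ℝ} (hw : M *ᵥ w = μ • w)
    (hpos : ∀ u, u ⬝ᵥ w = 0 → 0 ≤ u ⬝ᵥ M *ᵥ u)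
    (hv : M *ᵥ v = e • v) (hv_unit : v ⬝ᵥ v = 1) (he : e < 0) :
    e = μ ∧ (v ⬝ᵥ w) ^ 2 = w ⬝ᵥ w := by
  have hvw : v ⬝ᵥ w ≠ 0 := fun h => by
    have hquad := hpos v h
    rw [hv, dotProduct_smul, hv_unit, smul_eq_mul] at hquad
    linarith
  have heμ : e = μ := by
    have hsymm : v ⬝ᵥ M *ᵥ w = M *ᵥ v ⬝ᵥ w := by
      rw [Matrix.dotProduct_mulVec, ← Matrix.mulVec_transpose, hM.eq]
    rw [hw, hv, dotProduct_smul, smul_dotProduct] at hsymm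
    exact (mul_right_cancel₀ hvw hsymm).symm
  refine ⟨heμ, ?_⟩
  -- `u` is orthogonal to `w` and an eigenvector for `e < 0`, so it vanishes.
  set u := (w ⬝ᵥ w) • v - (v ⬝ᵥ w) • w with hu
  have hMu : M *ᵥ u = e • u := by
    rw [hu, Matrix.mulVec_sub, Matrix.mulVec_smul, Matrix.mulVec_smul, hv, hw, ← heμ, smul_sub,
      smul_comm e, smul_comm e]
  have huw : u ⬝ᵥ w = 0 := by
    simp only [hu, sub_dotProduct, smul_dotProduct, smul_eq_mul]
    ring
  have huu : u ⬝ᵥ u = (w ⬝ᵥ w) * (w ⬝ᵥ w - (v ⬝ᵥ w) ^ 2) := by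
    simp only [hu, sub_dotProduct, smul_dotProduct, dotProduct_sub, dotProduct_smul, smul_eq_mul,
      hv_unit, dotProduct_comm w v]
    ring
  have huu_zero : u ⬝ᵥ u = 0 := by
    have hquad := hpos u huw
    rw [hMu, dotProduct_smul, smul_eq_mul] at hquad
    exact le_antisymm (nonpos_of_mul_nonneg_right hquad he) (dotProduct_star_self_nonneg u)
  have hww : w ⬝ᵥ w ≠ 0 := fun h => hvw (by simp [dotProduct_self_eq_zero.1 h])
  rw [huu, mul_eq_zero, or_iff_right hww, sub_eq_zero] at huu_zero
  exact huu_zero.symm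

variable [DecidableEq ι] {M : Matrix ι ι ℝ}

theorem eigenvectorBasis_dotProduct_self (hM : M.IsHermitian) (i : ι) :
    (hM.eigenvectorBasis i : ι → ℝ) ⬝ᵥ hM.eigenvectorBasis i = 1 := by
  have h := inner_self_eq_one_of_norm_eq_one (𝕜 := ℝ) (hM.eigenvectorBasis.norm_eq_one i)
  rwa [EuclideanSpace.inner_eq_star_dotProduct, star_trivial] at h

theorem sum_sq_eigenvectorBasis_dotProduct (hM : M.IsHermitian) (w : ι → ℝ) :
    ∑ i, ((hM.eigenvectorBasis i : ι → ℝ) ⬝ᵥ w) ^ 2 = w ⬝ᵥ w := by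
  have h := hM.eigenvectorBasis.sum_sq_norm_inner_right (WithLp.toLp 2 w)
  rw [← real_inner_self_eq_norm_sq, EuclideanSpace.inner_eq_star_dotProduct, star_trivial] at h
  simpa [EuclideanSpace.inner_eq_star_dotProduct, dotProduct_comm] using h

theorem sum_min_eigenvalues_zero_eq (hM : M.IsHermitian) {w : ι → ℝ} {μ : ℝ} (hw₀ : w ≠ 0)
    (hw : M *ᵥ w = μ • w) (hμ : μ ≤ 0) (hpos : ∀ u, u ⬝ᵥ w = 0 → 0 ≤ u ⬝ᵥ M *ᵥ u) :
    ∑ i, min (hM.eigenvalues i) 0 = μ := by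
  have hww : w ⬝ᵥ w ≠ 0 := dotProduct_self_eq_zero.not.2 hw₀
  have hsymm : M.IsSymm := by simpa [Matrix.IsSymm] using hM.eq
  have hterm : ∀ i, min (hM.eigenvalues i) 0
      = μ * (((hM.eigenvectorBasis i : ι → ℝ) ⬝ᵥ w) ^ 2 / (w ⬝ᵥ w)) := by
    intro i
    have hv := hM.mulVec_eigenvectorBasis i
    rcases lt_or_ge (hM.eigenvalues i) 0 with he | he
    · obtain ⟨heμ, hsq⟩ := eq_and_sq_dotProduct_eq_of_mulVec_eq_smul_neg hsymm hw hpos hv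
        (eigenvectorBasis_dotProduct_self hM i) he
      rw [min_eq_left he.le, hsq, div_self hww, mul_one, heμ]
    · have horth : hM.eigenvalues i * ((hM.eigenvectorBasis i : ι → ℝ) ⬝ᵥ w)
          = μ * ((hM.eigenvectorBasis i : ι → ℝ) ⬝ᵥ w) := by
        rw [← smul_eq_mul, ← smul_dotProduct, ← hv, ← smul_eq_mul, ← dotProduct_smul, ← hw,
          Matrix.dotProduct_mulVec, ← Matrix.mulVec_transpose, hsymm.eq]
      rw [min_eq_right he]
      rcases mul_eq_mul_right_iff.1 horth with heμ | hvw
      · rw [le_antisymm hμ (heμ ▸ he), zero_mul]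
      · simp [hvw]
  rw [Finset.sum_congr rfl fun i _ => hterm i, ← Finset.mul_sum, ← Finset.sum_div,
    sum_sq_eigenvectorBasis_dotProduct, div_self hww, mul_one]

end Spectral

section Pucci

variable {k : ℕ} {M : Matrix (Fin k) (Fin k) ℝ}

theorem pucciPlus_eq_sum_min_sub_trace (la La : ℝ) (hM : M.IsHermitian) :
    pucciPlus la La hM = (la - La) * ∑ i, min (hM.eigenvalues i) 0 - la * M.trace := by
  have htrace : M.trace = ∑ i, hM.eigenvalues i := by simpa using hM.trace_eq_sum_eigenvalues
  rw [htrace, Finset.mul_sum, Finset.mul_sum, ← Finset.sum_sub_distrib]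
  refine Finset.sum_congr rfl fun i _ => ?_
  linear_combination -la * min_add_max (hM.eigenvalues i) 0

theorem pucciPlus_eq_of_rank_two_perturbation (la La : ℝ) (hM : M.IsHermitian) {p q : ℝ}
    {w z : Fin k → ℝ} (hp : p ≤ 0) (hq : 0 ≤ q) (hwz : w ⬝ᵥ z = 0) (hzz : z ⬝ᵥ z = w ⬝ᵥ w)
    (hM_eq : M = p • Matrix.vecMulVec w w
      + q • ((w ⬝ᵥ w) • 1 - Matrix.vecMulVec w w + (2 : ℝ) • Matrix.vecMulVec z z)) :
    pucciPlus la La hM = (w ⬝ᵥ w) * (-la * (k + 1) * q - La * p) := by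
  have htrace : M.trace = (w ⬝ᵥ w) * (p + (k + 1) * q) := by
    simp only [hM_eq, Matrix.trace_add, Matrix.trace_sub, Matrix.trace_smul, Matrix.trace_one,
      Matrix.trace_vecMulVec, hzz, Fintype.card_fin, smul_eq_mul]
    ring
  have hmulVec : ∀ v, M *ᵥ v = (p * (w ⬝ᵥ v)) • w
      + q • ((w ⬝ᵥ w) • v - (w ⬝ᵥ v) • w + (2 * (z ⬝ᵥ v)) • z) := by
    intro v
    simp [hM_eq, Matrix.add_mulVec, Matrix.sub_mulVec, Matrix.smul_mulVec, Matrix.vecMulVec_mulVec,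
      smul_smul, mul_assoc]
  have hsum : ∑ i, min (hM.eigenvalues i) 0 = (w ⬝ᵥ w) * p := by
    rcases eq_or_ne w 0 with rfl | hw₀
    · have hz : z = 0 := by simpa using hzz
      have hM_zero : M = 0 := by simp [hM_eq, hz]
      simp [hM.eigenvalues_eq_zero_iff.2 hM_zero]
    refine sum_min_eigenvalues_zero_eq hM hw₀ ?_ ?_ fun u hu => ?_
    · simp [hmulVec, dotProduct_comm z w, hwz, mul_comm p]
    · exact mul_nonpos_of_nonneg_of_nonpos (dotProduct_star_self_nonneg w) hp
    · have hquad : u ⬝ᵥ M *ᵥ u = q * ((w ⬝ᵥ w) * (u ⬝ᵥ u) + 2 * (u ⬝ᵥ z) ^ 2) := by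
        simp only [hmulVec, dotProduct_add, dotProduct_sub, dotProduct_smul, smul_eq_mul, hu,
          dotProduct_comm z u]
        ring
      have hww : 0 ≤ w ⬝ᵥ w := dotProduct_star_self_nonneg w
      have huu : 0 ≤ u ⬝ᵥ u := dotProduct_star_self_nonneg u
      rw [hquad]
      positivity
  rw [pucciPlus_eq_sum_min_sub_trace, hsum, htrace]
  ring

end Pucci

section SkewSymmetric

variable {ι R : Type*} [Fintype ι] [CommRing R] {A : Matrix ι ι R}

theorem dotProduct_mulVec_self_of_transpose_eq_neg [IsAddTorsionFree R] (hA : Aᵀ = -A)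
    (v : ι → R) : v ⬝ᵥ A *ᵥ v = 0 := by
  refine self_eq_neg.1 ?_
  conv_lhs => rw [Matrix.dotProduct_mulVec, ← Matrix.mulVec_transpose, hA, Matrix.neg_mulVec,
    neg_dotProduct, dotProduct_comm]

theorem mulVec_dotProduct_mulVec_of_transpose_mul_self [DecidableEq ι] (hA : Aᵀ * A = 1)
    (v w : ι → R) : A *ᵥ v ⬝ᵥ A *ᵥ w = v ⬝ᵥ w := by
  rw [Matrix.dotProduct_mulVec, ← Matrix.mulVec_transpose, Matrix.mulVec_mulVec, hA,
    Matrix.one_mulVec]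

end SkewSymmetric

section SymplecticMatrix

/-- The conjugate pairs of horizontal coordinates: `inl i` and `inr i` are the indices `i` and
`i + n`. -/
def horizontalIndexEquiv (n : ℕ) : Fin n ⊕ Fin n ≃ Fin (2 * n) :=
  finSumFinEquiv.trans (finCongr (two_mul n).symm)

/-- The matrix of the symplectic form of `ℝ^{2n}` behind the Heisenberg group law. The sign of
`Matrix.J` is reversed because `X_i` carries the coefficient `+2 ξ_{i+n}` for `i < n`. -/
def symplecticMatrix (n : ℕ) : Matrix (Fin (2 * n)) (Fin (2 * n)) ℝ :=
  Matrix.reindex (horizontalIndexEquiv n) (horizontalIndexEquiv n) (-Matrix.J (Fin n) ℝ)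

theorem symplecticMatrix_transpose (n : ℕ) : (symplecticMatrix n)ᵀ = -symplecticMatrix n := by
  rw [symplecticMatrix, Matrix.transpose_reindex, Matrix.transpose_neg, Matrix.J_transpose]
  rfl

theorem symplecticMatrix_mul_self (n : ℕ) : symplecticMatrix n * symplecticMatrix n = -1 := by
  rw [symplecticMatrix, Matrix.reindex_apply, Matrix.submatrix_mul_equiv, neg_mul_neg,
    Matrix.J_squared, Matrix.submatrix_neg]
  simp

theorem symplecticMatrix_transpose_mul_self (n : ℕ) :
    (symplecticMatrix n)ᵀ * symplecticMatrix n = 1 := by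
  rw [symplecticMatrix_transpose, neg_mul, symplecticMatrix_mul_self, neg_neg]

theorem symplecticMatrix_mulVec_apply (n : ℕ) (v : Fin (2 * n) → ℝ) (i : Fin (2 * n)) :
    (symplecticMatrix n *ᵥ v) i =
      if h : (i : ℕ) < n then v ⟨i + n, by omega⟩ else -v ⟨i - n, by omega⟩ := by
  obtain ⟨s, rfl⟩ := (horizontalIndexEquiv n).surjective i
  rw [symplecticMatrix, Matrix.reindex_apply, Matrix.submatrix_mulVec_equiv]
  rcases s with j | j
  · have hlt : (horizontalIndexEquiv n (.inl j) : ℕ) < n := j.isLt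
    have hconj :
        horizontalIndexEquiv n (.inr j) = ⟨horizontalIndexEquiv n (.inl j) + n, by omega⟩ :=
      Fin.ext (Nat.add_comm n j)
    simp [Matrix.J, Matrix.fromBlocks_neg, Matrix.fromBlocks_mulVec, hlt, hconj]
  · have hval : (horizontalIndexEquiv n (.inr j) : ℕ) = n + j := rfl
    have hconj : horizontalIndexEquiv n (.inl j) = ⟨j, by omega⟩ := rfl
    simp [Matrix.J, Matrix.fromBlocks_neg, Matrix.fromBlocks_mulVec, Matrix.neg_mulVec, hval, hconj]

end SymplecticMatrix

section HeisenbergCalculus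

variable {n : ℕ} {f g : (Fin (2 * n + 1) → ℝ) → ℝ} {ξ : Fin (2 * n + 1) → ℝ}

/-- The Heisenberg gradient `∇_{H^n} f = (X_1 f, …, X_{2n} f)`. -/
def hgrad (n : ℕ) (f : (Fin (2 * n + 1) → ℝ) → ℝ) (ξ : Fin (2 * n + 1) → ℝ) :
    Fin (2 * n) → ℝ :=
  fun i => X n i f ξ

theorem gradSq_eq_dotProduct_hgrad (n : ℕ) (ξ : Fin (2 * n + 1) → ℝ) :
    gradSq n ξ = hgrad n (rho n) ξ ⬝ᵥ hgrad n (rho n) ξ :=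
  Finset.sum_congr rfl fun _ _ => sq _

theorem X_congr (h : f =ᶠ[𝓝 ξ] g) (i : Fin (2 * n)) : X n i f ξ = X n i g ξ := by
  rw [X, h.fderiv_eq, X]

theorem X_linearMap (L : (Fin (2 * n + 1) → ℝ) →ₗ[ℝ] ℝ) (i : Fin (2 * n)) :
    X n i L ξ = L (Xvec n ξ i) := by
  rw [X, ← LinearMap.coe_toContinuousLinearMap' L, ContinuousLinearMap.fderiv]

theorem X_add (hf : DifferentiableAt ℝ f ξ) (hg : DifferentiableAt ℝ g ξ) (i : Fin (2 * n)) :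
    X n i (fun η => f η + g η) ξ = X n i f ξ + X n i g ξ := by
  simp [X, fderiv_fun_add hf hg]

theorem X_mul (hf : DifferentiableAt ℝ f ξ) (hg : DifferentiableAt ℝ g ξ) (i : Fin (2 * n)) :
    X n i (fun η => f η * g η) ξ = f ξ * X n i g ξ + g ξ * X n i f ξ := by
  simp [X, fderiv_fun_mul hf hg]

theorem X_comp {φ : ℝ → ℝ} {d : ℝ} (hφ : HasDerivAt φ d (f ξ)) (hf : DifferentiableAt ℝ f ξ)
    (i : Fin (2 * n)) : X n i (fun η => φ (f η)) ξ = d * X n i f ξ := by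
  have h : HasFDerivAt (fun η => φ (f η)) (d • fderiv ℝ f ξ) ξ :=
    hφ.comp_hasFDerivAt ξ hf.hasFDerivAt
  simp [X, h.fderiv]

theorem differentiable_Xvec (i : Fin (2 * n)) : Differentiable ℝ fun ξ => Xvec n ξ i := by
  refine differentiable_pi.2 fun j => ?_
  unfold Xvec
  split_ifs <;> fun_prop

theorem differentiableAt_X (hf : ContDiffAt ℝ 2 f ξ) (i : Fin (2 * n)) :
    DifferentiableAt ℝ (X n i f) ξ :=
  have hfderiv : DifferentiableAt ℝ (fderiv ℝ f) ξ :=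
    (hf.fderiv_right (m := 1) (by norm_num)).differentiableAt one_ne_zero
  hfderiv.clm_apply (differentiable_Xvec i ξ)

theorem hgrad_add (hf : DifferentiableAt ℝ f ξ) (hg : DifferentiableAt ℝ g ξ) :
    hgrad n (fun η => f η + g η) ξ = hgrad n f ξ + hgrad n g ξ :=
  funext (X_add hf hg)

theorem hgrad_comp {φ : ℝ → ℝ} {d : ℝ} (hφ : HasDerivAt φ d (f ξ))
    (hf : DifferentiableAt ℝ f ξ) : hgrad n (fun η => φ (f η)) ξ = d • hgrad n f ξ :=
  funext (X_comp hφ hf)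

theorem HessH_add (hf : ContDiffAt ℝ 2 f ξ) (hg : ContDiffAt ℝ 2 g ξ) :
    HessH n (fun η => f η + g η) ξ = HessH n f ξ + HessH n g ξ := by
  have hXX : ∀ i j, X n i (fun η => X n j (fun ζ => f ζ + g ζ) η) ξ
      = X n i (X n j f) ξ + X n i (X n j g) ξ := by
    intro i j
    rw [← X_add (differentiableAt_X hf j) (differentiableAt_X hg j)]
    refine X_congr ?_ i
    filter_upwards [hf.eventually (by simp), hg.eventually (by simp)] with η hfη hgη
    exact X_add (hfη.differentiableAt two_ne_zero) (hgη.differentiableAt two_ne_zero) j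
  ext i j
  simp only [HessH, Matrix.of_apply, Matrix.add_apply, hXX]
  ring

theorem HessH_comp {φ φ' : ℝ → ℝ} {d : ℝ} (hf : ContDiffAt ℝ 2 f ξ)
    (hφ : ∀ᶠ r in 𝓝 (f ξ), HasDerivAt φ (φ' r) r) (hφ' : HasDerivAt φ' d (f ξ)) :
    HessH n (fun η => φ (f η)) ξ
      = d • Matrix.vecMulVec (hgrad n f ξ) (hgrad n f ξ) + φ' (f ξ) • HessH n f ξ := by
  have hdiff : DifferentiableAt ℝ f ξ := hf.differentiableAt two_ne_zero
  have hXX : ∀ i j, X n i (fun η => X n j (fun ζ => φ (f ζ)) η) ξ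
      = d * (X n i f ξ * X n j f ξ) + φ' (f ξ) * X n i (X n j f) ξ := by
    intro i j
    have hX : (fun η => X n j (fun ζ => φ (f ζ)) η) =ᶠ[𝓝 ξ] fun η => φ' (f η) * X n j f η := by
      filter_upwards [hf.eventually (by simp), hdiff.continuousAt.eventually hφ] with η hfη hφη
      exact X_comp hφη (hfη.differentiableAt two_ne_zero) j
    have hφ'f : DifferentiableAt ℝ (fun η => φ' (f η)) ξ := hφ'.differentiableAt.comp ξ hdiff
    rw [X_congr hX, X_mul hφ'f (differentiableAt_X hf j), X_comp hφ' hdiff]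
    ring
  ext i j
  simp only [HessH, Matrix.of_apply, Matrix.add_apply, Matrix.smul_apply, Matrix.vecMulVec_apply,
    smul_eq_mul, hgrad, hXX]
  ring

theorem HessH_sq (hf : ContDiffAt ℝ 2 f ξ) :
    HessH n (fun η => f η ^ 2) ξ
      = (2 : ℝ) • Matrix.vecMulVec (hgrad n f ξ) (hgrad n f ξ) + (2 * f ξ) • HessH n f ξ := by
  refine HessH_comp (φ := fun r => r ^ 2) (φ' := fun r => 2 * r) hf (.of_forall fun r => ?_) ?_
  · simpa using hasDerivAt_pow 2 r
  · simpa using (hasDerivAt_id (f ξ)).const_mul 2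

end HeisenbergCalculus

section HomogeneousNorm

variable {n : ℕ} {ξ : Fin (2 * n + 1) → ℝ}

/-- The projection `ℝ^{2n+1} → ℝ^{2n}` onto the horizontal coordinates. -/
def horiz (n : ℕ) : (Fin (2 * n + 1) → ℝ) →ₗ[ℝ] (Fin (2 * n) → ℝ) :=
  LinearMap.funLeft ℝ ℝ Fin.castSucc

theorem hsq_eq_dotProduct_horiz (n : ℕ) (ξ : Fin (2 * n + 1) → ℝ) :
    hsq n ξ = horiz n ξ ⬝ᵥ horiz n ξ :=
  Finset.sum_congr rfl fun _ _ => sq _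

theorem horiz_Xvec (ξ : Fin (2 * n + 1) → ℝ) (i : Fin (2 * n)) :
    horiz n (Xvec n ξ i) = Pi.single i 1 := by
  ext j
  have hj : (j : ℕ) ≠ 2 * n := j.isLt.ne
  simp [horiz, LinearMap.funLeft_apply, Xvec, hj, Pi.single_apply, Fin.ext_iff]

theorem Xvec_last (ξ : Fin (2 * n + 1) → ℝ) (i : Fin (2 * n)) :
    Xvec n ξ i (Fin.last (2 * n)) = 2 * (symplecticMatrix n *ᵥ horiz n ξ) i := by
  have hi : 2 * n ≠ (i : ℕ) := i.isLt.ne'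
  rw [symplecticMatrix_mulVec_apply]
  by_cases h : (i : ℕ) < n <;> simp [Xvec, hi, h, horiz, LinearMap.funLeft_apply]

theorem hgrad_last (ξ : Fin (2 * n + 1) → ℝ) :
    hgrad n (fun η => η (Fin.last (2 * n))) ξ = (2 : ℝ) • (symplecticMatrix n *ᵥ horiz n ξ) := by
  ext i
  exact (X_linearMap (LinearMap.proj (Fin.last (2 * n))) i).trans (Xvec_last ξ i)

theorem HessH_last (ξ : Fin (2 * n + 1) → ℝ) :
    HessH n (fun η => η (Fin.last (2 * n))) ξ = 0 := by
  have hXX : ∀ i j, X n i (fun η => X n j (fun ζ => ζ (Fin.last (2 * n))) η) ξ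
      = 2 * symplecticMatrix n j i := by
    intro i j
    have hX : (fun η => X n j (fun ζ => ζ (Fin.last (2 * n))) η)
        = ((2 : ℝ) • LinearMap.proj j ∘ₗ (symplecticMatrix n).mulVecLin ∘ₗ horiz n :
          (Fin (2 * n + 1) → ℝ) →ₗ[ℝ] ℝ) :=
      funext fun η => congrFun (hgrad_last η) j
    rw [hX, X_linearMap]
    simp [horiz_Xvec]
  ext i j
  have hskew := congrFun₂ (symplecticMatrix_transpose n) i j
  rw [Matrix.transpose_apply, Matrix.neg_apply] at hskew
  simp [HessH, hXX, hskew]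

theorem contDiff_hsq (n : ℕ) : ContDiff ℝ 2 (hsq n) := by
  unfold hsq
  fun_prop

theorem hasFDerivAt_hsq (ξ : Fin (2 * n + 1) → ℝ) :
    HasFDerivAt (hsq n)
      (∑ j : Fin (2 * n), (2 * ξ j.castSucc) •
        (ContinuousLinearMap.proj j.castSucc : (Fin (2 * n + 1) → ℝ) →L[ℝ] ℝ)) ξ :=
  HasFDerivAt.fun_sum fun j _ =>
    ((hasFDerivAt_apply (𝕜 := ℝ) j.castSucc ξ).pow 2).congr_fderiv (by simp)

theorem hgrad_hsq (ξ : Fin (2 * n + 1) → ℝ) : hgrad n (hsq n) ξ = (2 : ℝ) • horiz n ξ := by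
  ext i
  have hXvec : ∀ j : Fin (2 * n), Xvec n ξ i j.castSucc = (Pi.single i 1 : Fin (2 * n) → ℝ) j :=
    congrFun (horiz_Xvec ξ i)
  simp [hgrad, X, (hasFDerivAt_hsq ξ).fderiv, hXvec, Pi.single_apply, horiz,
    LinearMap.funLeft_apply]

theorem HessH_hsq (ξ : Fin (2 * n + 1) → ℝ) : HessH n (hsq n) ξ = (2 : ℝ) • 1 := by
  have hXX : ∀ i j, X n i (fun η => X n j (hsq n) η) ξ = 2 * (1 : Matrix _ _ ℝ) i j := by
    intro i j
    have hX : (fun η => X n j (hsq n) η)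
        = ((2 : ℝ) • LinearMap.proj j ∘ₗ horiz n : (Fin (2 * n + 1) → ℝ) →ₗ[ℝ] ℝ) :=
      funext fun η => congrFun (hgrad_hsq η) j
    rw [hX, X_linearMap]
    simp [horiz_Xvec, Matrix.one_apply, Pi.single_apply, eq_comm]
  ext i j
  simp [HessH, hXX, Matrix.one_apply, eq_comm]

theorem rho_pow_four (n : ℕ) (ξ : Fin (2 * n + 1) → ℝ) :
    rho n ξ ^ 4 = hsq n ξ ^ 2 + ξ (Fin.last (2 * n)) ^ 2 := by
  rw [rho, ← Real.rpow_natCast, ← Real.rpow_mul (by positivity),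
    show (1 / 4 : ℝ) * (4 : ℕ) = 1 by norm_num, Real.rpow_one]
  rfl

theorem rho_pos (hξ : ξ ≠ 0) : 0 < rho n ξ := by
  have hnonneg : 0 ≤ rho n ξ := Real.rpow_nonneg (by positivity) _
  refine hnonneg.lt_of_ne' fun h => hξ ?_
  have hsum := rho_pow_four n ξ
  rw [h, zero_pow four_ne_zero, eq_comm,
    add_eq_zero_iff_of_nonneg (sq_nonneg _) (sq_nonneg _), sq_eq_zero_iff, sq_eq_zero_iff,
    hsq_eq_dotProduct_horiz, dotProduct_self_eq_zero] at hsum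
  exact funext (Fin.lastCases hsum.2 (congrFun hsum.1))

theorem contDiffAt_rho (hξ : ξ ≠ 0) : ContDiffAt ℝ 2 (rho n) ξ := by
  have hne : hsq n ξ ^ 2 + ξ (Fin.last (2 * n)) ^ 2 ≠ 0 := by
    rw [← rho_pow_four]
    exact (pow_pos (rho_pos hξ) 4).ne'
  have hsq_contDiff := contDiff_hsq n
  exact ContDiffAt.rpow_const_of_ne (by fun_prop) hne

theorem hgrad_rho_pow_four (ξ : Fin (2 * n + 1) → ℝ) :
    hgrad n (fun η => rho n η ^ 4) ξ
      = (4 : ℝ) • (hsq n ξ • horiz n ξ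
        + ξ (Fin.last (2 * n)) • (symplecticMatrix n *ᵥ horiz n ξ)) := by
  have hh := (contDiff_hsq n).differentiable two_ne_zero ξ
  simp only [rho_pow_four]
  rw [hgrad_add (by fun_prop) (by fun_prop),
    hgrad_comp (hasDerivAt_pow 2 _) hh, hgrad_comp (hasDerivAt_pow 2 _) (by fun_prop),
    hgrad_hsq, hgrad_last]
  module

theorem HessH_rho_pow_four (ξ : Fin (2 * n + 1) → ℝ) :
    HessH n (fun η => rho n η ^ 4) ξ
      = (4 * hsq n ξ) • 1
        + (8 : ℝ) • (Matrix.vecMulVec (horiz n ξ) (horiz n ξ)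
          + Matrix.vecMulVec (symplecticMatrix n *ᵥ horiz n ξ)
            (symplecticMatrix n *ᵥ horiz n ξ)) := by
  have hh := contDiff_hsq n
  simp only [rho_pow_four]
  rw [HessH_add (by fun_prop) (by fun_prop), HessH_sq hh.contDiffAt, HessH_sq (by fun_prop),
    hgrad_hsq, HessH_hsq, hgrad_last, HessH_last]
  simp only [Matrix.smul_vecMulVec, Matrix.vecMulVec_smul]
  module

theorem rho_pow_three_smul_hgrad_rho (hξ : ξ ≠ 0) :
    rho n ξ ^ 3 • hgrad n (rho n) ξ
      = hsq n ξ • horiz n ξ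
        + ξ (Fin.last (2 * n)) • (symplecticMatrix n *ᵥ horiz n ξ) := by
  have hchain := hgrad_comp (hasDerivAt_pow 4 (rho n ξ))
    ((contDiffAt_rho hξ).differentiableAt two_ne_zero)
  rw [hgrad_rho_pow_four] at hchain
  refine smul_right_injective _ (four_ne_zero (α := ℝ)) ?_
  simp [hchain, mul_smul]

theorem rho_pow_three_smul_symplecticMatrix_mulVec_hgrad_rho (hξ : ξ ≠ 0) :
    rho n ξ ^ 3 • (symplecticMatrix n *ᵥ hgrad n (rho n) ξ)
      = hsq n ξ • (symplecticMatrix n *ᵥ horiz n ξ) - ξ (Fin.last (2 * n)) • horiz n ξ := by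
  rw [← Matrix.mulVec_smul, rho_pow_three_smul_hgrad_rho hξ, Matrix.mulVec_add, Matrix.mulVec_smul,
    Matrix.mulVec_smul, Matrix.mulVec_mulVec, symplecticMatrix_mul_self, Matrix.neg_mulVec,
    Matrix.one_mulVec, smul_neg, sub_eq_add_neg]

theorem rho_sq_mul_gradSq (hξ : ξ ≠ 0) : rho n ξ ^ 2 * gradSq n ξ = hsq n ξ := by
  have hrot : horiz n ξ ⬝ᵥ symplecticMatrix n *ᵥ horiz n ξ = 0 :=
    dotProduct_mulVec_self_of_transpose_eq_neg (symplecticMatrix_transpose n) _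
  have hnorm : rho n ξ ^ 6 * gradSq n ξ = rho n ξ ^ 4 * hsq n ξ := by
    calc rho n ξ ^ 6 * gradSq n ξ
        = (rho n ξ ^ 3 • hgrad n (rho n) ξ) ⬝ᵥ (rho n ξ ^ 3 • hgrad n (rho n) ξ) := by
          rw [gradSq_eq_dotProduct_hgrad, smul_dotProduct, dotProduct_smul, smul_eq_mul,
            smul_eq_mul]
          ring
      _ = (hsq n ξ ^ 2 + ξ (Fin.last (2 * n)) ^ 2) * hsq n ξ := by
          simp only [rho_pow_three_smul_hgrad_rho hξ, add_dotProduct, dotProduct_add,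
            smul_dotProduct, dotProduct_smul, smul_eq_mul, hrot,
            dotProduct_comm (symplecticMatrix n *ᵥ horiz n ξ) (horiz n ξ),
            mulVec_dotProduct_mulVec_of_transpose_mul_self (symplecticMatrix_transpose_mul_self n),
            ← hsq_eq_dotProduct_horiz]
          ring
      _ = rho n ξ ^ 4 * hsq n ξ := by rw [rho_pow_four]
  refine mul_left_cancel₀ (pow_pos (rho_pos hξ) 4).ne' ?_
  linear_combination hnorm

theorem vecMulVec_horiz_add_vecMulVec_mulVec_horiz (hξ : ξ ≠ 0) :
    Matrix.vecMulVec (horiz n ξ) (horiz n ξ)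
        + Matrix.vecMulVec (symplecticMatrix n *ᵥ horiz n ξ) (symplecticMatrix n *ᵥ horiz n ξ)
      = rho n ξ ^ 2 • (Matrix.vecMulVec (hgrad n (rho n) ξ) (hgrad n (rho n) ξ)
        + Matrix.vecMulVec (symplecticMatrix n *ᵥ hgrad n (rho n) ξ)
          (symplecticMatrix n *ᵥ hgrad n (rho n) ξ)) := by
  ext i j
  have hgrad_apply := congrFun (rho_pow_three_smul_hgrad_rho hξ)
  have hrot_apply := congrFun (rho_pow_three_smul_symplecticMatrix_mulVec_hgrad_rho hξ)
  simp only [Pi.smul_apply, Pi.add_apply, Pi.sub_apply, smul_eq_mul] at hgrad_apply hrot_apply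
  simp only [Matrix.add_apply, Matrix.smul_apply, Matrix.vecMulVec_apply, smul_eq_mul]
  refine mul_left_cancel₀ (pow_pos (rho_pos hξ) 4).ne' ?_
  calc rho n ξ ^ 4 * (horiz n ξ i * horiz n ξ j
        + (symplecticMatrix n *ᵥ horiz n ξ) i * (symplecticMatrix n *ᵥ horiz n ξ) j)
      = (rho n ξ ^ 3 * hgrad n (rho n) ξ i) * (rho n ξ ^ 3 * hgrad n (rho n) ξ j)
        + (rho n ξ ^ 3 * (symplecticMatrix n *ᵥ hgrad n (rho n) ξ) i)
          * (rho n ξ ^ 3 * (symplecticMatrix n *ᵥ hgrad n (rho n) ξ) j) := by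
        rw [hgrad_apply, hgrad_apply, hrot_apply, hrot_apply, rho_pow_four]
        ring
    _ = _ := by ring

theorem HessH_rho (hξ : ξ ≠ 0) :
    HessH n (rho n) ξ
      = (rho n ξ)⁻¹ • (gradSq n ξ • 1 - Matrix.vecMulVec (hgrad n (rho n) ξ) (hgrad n (rho n) ξ)
        + (2 : ℝ) • Matrix.vecMulVec (symplecticMatrix n *ᵥ hgrad n (rho n) ξ)
          (symplecticMatrix n *ᵥ hgrad n (rho n) ξ)) := by
  have hρ := (rho_pos hξ).ne'
  have hchain : HessH n (fun η => rho n η ^ 4) ξ = _ :=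
    HessH_comp (φ := fun r => r ^ 4) (φ' := fun r => 4 * r ^ 3) (d := 4 * (3 * rho n ξ ^ 2))
      (contDiffAt_rho hξ) (.of_forall fun r => by simpa using hasDerivAt_pow 4 r)
      (by simpa using (hasDerivAt_pow 3 (rho n ξ)).const_mul 4)
  rw [HessH_rho_pow_four, vecMulVec_horiz_add_vecMulVec_mulVec_horiz hξ, ← rho_sq_mul_gradSq hξ]
    at hchain
  ext i j
  have hentry := congrFun₂ hchain i j
  simp only [Matrix.add_apply, Matrix.sub_apply, Matrix.smul_apply, smul_eq_mul] at hentry ⊢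
  field_simp
  refine mul_left_cancel₀ (pow_ne_zero 2 hρ) ?_
  linear_combination -hentry / 4

end HomogeneousNorm

section RadialFunctions

theorem HessH_comp_rho {n : ℕ} {ξ : Fin (2 * n + 1) → ℝ} (hξ : ξ ≠ 0) {φ φ' : ℝ → ℝ} {d : ℝ}
    (hφ : ∀ᶠ r in 𝓝 (rho n ξ), HasDerivAt φ (φ' r) r) (hφ' : HasDerivAt φ' d (rho n ξ)) :
    HessH n (fun η => φ (rho n η)) ξ
      = d • Matrix.vecMulVec (hgrad n (rho n) ξ) (hgrad n (rho n) ξ)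
        + (φ' (rho n ξ) / rho n ξ) • (gradSq n ξ • 1
          - Matrix.vecMulVec (hgrad n (rho n) ξ) (hgrad n (rho n) ξ)
          + (2 : ℝ) • Matrix.vecMulVec (symplecticMatrix n *ᵥ hgrad n (rho n) ξ)
            (symplecticMatrix n *ᵥ hgrad n (rho n) ξ)) := by
  rw [HessH_comp (contDiffAt_rho hξ) hφ hφ', HessH_rho hξ, smul_smul, div_eq_mul_inv]

theorem pucciPlus_HessH_comp_rho (la La : ℝ) {n : ℕ} {ξ : Fin (2 * n + 1) → ℝ} (hξ : ξ ≠ 0)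
    {φ φ' : ℝ → ℝ} {d : ℝ} (hφ : ∀ᶠ r in 𝓝 (rho n ξ), HasDerivAt φ (φ' r) r)
    (hφ' : HasDerivAt φ' d (rho n ξ)) (hmono : 0 ≤ φ' (rho n ξ)) (hconc : d ≤ 0)
    (hM : (HessH n (fun η => φ (rho n η)) ξ).IsHermitian) :
    pucciPlus la La hM
      = gradSq n ξ * (-la * (2 * n + 1) * (φ' (rho n ξ) / rho n ξ) - La * d) := by
  have hHess := HessH_comp_rho hξ hφ hφ'
  rw [gradSq_eq_dotProduct_hgrad] at hHess ⊢
  rw [pucciPlus_eq_of_rank_two_perturbation la La hM hconc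
    (div_nonneg hmono (rho_pos hξ).le)
    (dotProduct_mulVec_self_of_transpose_eq_neg (symplecticMatrix_transpose n) _)
    (mulVec_dotProduct_mulVec_of_transpose_mul_self (symplecticMatrix_transpose_mul_self n) _ _)
    hHess]
  push_cast
  rfl

end RadialFunctions

section Profile

theorem concaveOn_Ioi_of_hasDerivAt {f f' : ℝ → ℝ} {a : ℝ}
    (hf : ∀ r, a < r → HasDerivAt f (f' r) r) (hf' : AntitoneOn f' (Set.Ioi a)) :
    ConcaveOn ℝ (Set.Ioi a) f := by
  refine AntitoneOn.concaveOn_of_deriv (convex_Ioi a)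
    (fun r hr => (hf r hr).continuousAt.continuousWithinAt) ?_ ?_
  · rw [interior_Ioi]
    exact fun r hr => (hf r hr).differentiableAt.differentiableWithinAt
  · rw [interior_Ioi]
    exact hf'.congr fun r hr => (hf r hr).deriv.symm

theorem monotoneOn_Ioi_of_hasDerivAt {f f' : ℝ → ℝ} {a : ℝ}
    (hf : ∀ r, a < r → HasDerivAt f (f' r) r) (hf' : ∀ r, a < r → 0 ≤ f' r) :
    MonotoneOn f (Set.Ioi a) := by
  refine monotoneOn_of_hasDerivWithinAt_nonneg (f' := f') (convex_Ioi a)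
    (fun r hr => (hf r hr).continuousAt.continuousWithinAt) ?_ ?_
  · exact fun r hr => (hf r (interior_subset hr)).hasDerivWithinAt
  · exact fun r hr => hf' r (interior_subset hr)

/-- The concave increasing profile `φ₁` of the fundamental solution: up to normalisation, the
primitive of `r ^ (1 - α)`. -/
def fundamentalProfile (α C₁ C₂ : ℝ) (r : ℝ) : ℝ :=
  if α < 2 then C₁ * r ^ (2 - α) + C₂
  else if α = 2 then C₁ * Real.log r + C₂
  else -C₁ * r ^ (2 - α) + C₂

theorem hasDerivAt_const_mul_rpow_add_const {r : ℝ} (hr : 0 < r) (α C C₂ : ℝ) :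
    HasDerivAt (fun r : ℝ => C * r ^ (2 - α) + C₂) (C * (2 - α) * r ^ (1 - α)) r := by
  refine (((Real.hasDerivAt_rpow_const (p := 2 - α) (.inl hr.ne')).const_mul C).add_const
    C₂).congr_deriv ?_
  rw [show 2 - α - 1 = 1 - α by ring, mul_assoc]

theorem exists_hasDerivAt_fundamentalProfile (α C₂ : ℝ) {C₁ : ℝ} (hC : 0 ≤ C₁) :
    ∃ c, 0 ≤ c ∧ ∀ r, 0 < r → HasDerivAt (fundamentalProfile α C₁ C₂) (c * r ^ (1 - α)) r := by
  unfold fundamentalProfile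
  rcases lt_trichotomy α 2 with h | rfl | h
  · refine ⟨C₁ * (2 - α), mul_nonneg hC (sub_nonneg.2 h.le), fun r hr => ?_⟩
    simp only [h, if_true]
    exact hasDerivAt_const_mul_rpow_add_const hr α C₁ C₂
  · refine ⟨C₁, hC, fun r hr => ?_⟩
    have hexp : (1 - 2 : ℝ) = -1 := by norm_num
    simp only [lt_irrefl, if_false, if_true, hexp, Real.rpow_neg_one]
    exact ((Real.hasDerivAt_log hr.ne').const_mul C₁).add_const C₂
  · refine ⟨-C₁ * (2 - α),
      mul_nonneg_of_nonpos_of_nonpos (neg_nonpos.2 hC) (sub_nonpos.2 h.le), fun r hr => ?_⟩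
    simp only [h.not_gt, h.ne', if_false]
    exact hasDerivAt_const_mul_rpow_add_const hr α (-C₁) C₂

end Profile

theorem fundamental_solution_pucci_plus_concave_general (n : ℕ) {la La C₁ : ℝ} (C₂ : ℝ)
    (hla : 0 ≤ la) (hLa : 0 < La) (hC : 0 ≤ C₁) {α : ℝ} (hα : α = la / La * (2 * n + 1) + 1)
    (hM : ∀ ξ, (HessH n (fun η => fundamentalProfile α C₁ C₂ (rho n η)) ξ).IsHermitian) :
    (∀ ξ, ξ ≠ 0 → pucciPlus la La (hM ξ) = 0) ∧
      ConcaveOn ℝ (Set.Ioi 0) (fundamentalProfile α C₁ C₂) ∧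
      MonotoneOn (fundamentalProfile α C₁ C₂) (Set.Ioi 0) := by
  obtain ⟨c, hc, hderiv⟩ := exists_hasDerivAt_fundamentalProfile α C₂ hC
  have hexp : 1 - α ≤ 0 := by
    rw [hα, sub_add_cancel_right]
    exact neg_nonpos.2 (by positivity)
  refine ⟨fun ξ hξ => ?_, concaveOn_Ioi_of_hasDerivAt hderiv fun r hr s _ hrs => ?_,
    monotoneOn_Ioi_of_hasDerivAt hderiv fun r hr => by positivity⟩
  · have hρ := rho_pos hξ
    have hsecond : HasDerivAt (fun r : ℝ => c * r ^ (1 - α))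
        (c * ((1 - α) * (rho n ξ ^ (1 - α) / rho n ξ))) (rho n ξ) := by
      rw [← Real.rpow_sub_one hρ.ne']
      exact (Real.hasDerivAt_rpow_const (.inl hρ.ne')).const_mul c
    have hsecond_nonpos : c * ((1 - α) * (rho n ξ ^ (1 - α) / rho n ξ)) ≤ 0 :=
      mul_nonpos_of_nonneg_of_nonpos hc (mul_nonpos_of_nonpos_of_nonneg hexp (by positivity))
    have hode : La * (α - 1) = la * (2 * n + 1) := by rw [hα]; field_simp; ring
    rw [pucciPlus_HessH_comp_rho la La hξ ((lt_mem_nhds hρ).mono hderiv) hsecond (by positivity)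
      hsecond_nonpos]
    linear_combination gradSq n ξ * c * (rho n ξ ^ (1 - α) / rho n ξ) * hode
  · exact mul_le_mul_of_nonneg_left (Real.rpow_le_rpow_of_nonpos hr hrs hexp) hc

/-- with `α = (λ/Λ)(Q-1)+1`, `Q = 2n+2`, the radial function
`Φ₁ = φ₁ ∘ ρ`, with `φ₁(r) = C₁ r^{2-α}+C₂` (`α<2`), `C₁ log r + C₂` (`α=2`)
or `-C₁ r^{2-α}+C₂` (`α>2`), `C₁ ≥ 0`, satisfies `𝓜⁺_{λ,Λ}(D²Φ₁)=0` classically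
in `ℝ^{2n+1} \ {0}`, and `φ₁` is concave and increasing on `(0,∞)`. -/
theorem fundamental_solution_pucci_plus_concave (n : ℕ) (hn : 1 ≤ n)
    (la La C₁ C₂ : ℝ) (h0 : 0 < la) (hle : la ≤ La) (hC : 0 ≤ C₁)
    (α : ℝ) (hα : α = la / La * (2*n + 1) + 1)
    (φ : ℝ → ℝ)
    (hφ : φ = fun r =>
      if α < 2 then C₁ * r ^ (2 - α) + C₂
      else if α = 2 then C₁ * Real.log r + C₂
      else -C₁ * r ^ (2 - α) + C₂)
    (hM : ∀ ξ : Fin (2*n+1) → ℝ,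
      (HessH n (fun η => φ (rho n η)) ξ).IsHermitian) :
    (∀ ξ : Fin (2*n+1) → ℝ, ξ ≠ 0 → pucciPlus la La (hM ξ) = 0) ∧
    ConcaveOn ℝ (Set.Ioi 0) φ ∧ MonotoneOn φ (Set.Ioi 0) := by
  subst hφ
  exact fundamental_solution_pucci_plus_concave_general n C₂ h0.le (h0.trans_le hle) hC hα hM
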